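/- Let C ∈ Mₙ(ℂ) be a Hermitian matrix with characteristic polynomial χ_C = c₀ + c₁X + ⋯ + c_{n−1}X^{n−1} + Xⁿ. Then all cᵢ are real, and the type of C is (p,q), where p is the number of sign changes in the sequence c₀, c₁, …, c_{n−1}, 1, and q is the number of sign changes in the sequence c₀, −c₁, …, (−1)^{n−1} c_{n−1}, (−1)ⁿ. Moreover, if c₀ = ⋯ = c_{r−1} = 0 and c_r ≠ 0, then p + q = n − r. -/

import Mathlib

open Matrix

/-- The number of sign changes in a list of real numbers, counted after deleting zeros. -/
noncomputable def signChanges (l : List ℝ) : ℕ :=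
  let l' := l.filter (fun a => decide (a ≠ 0))
  (l'.zip l'.tail).countP (fun p => decide (p.1 * p.2 < 0))

/-- The type `(p, q)` of a complex Hermitian matrix, via Sylvester's law of inertia for
the Hermitian form `(x, y) ↦ xᴴ C y` on `ℂⁿ`. -/
def Matrix.IsHermTypeOf {n : ℕ} (C : Matrix (Fin n) (Fin n) ℂ) (p q : ℕ) : Prop :=
  IsGreatest {d : ℕ | ∃ W : Submodule ℂ (Fin n → ℂ), Module.finrank ℂ W = d ∧
      ∀ x ∈ W, x ≠ 0 → 0 < (star x ⬝ᵥ C.mulVec x).re} p ∧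
  IsGreatest {d : ℕ | ∃ W : Submodule ℂ (Fin n → ℂ), Module.finrank ℂ W = d ∧
      ∀ x ∈ W, x ≠ 0 → (star x ⬝ᵥ C.mulVec x).re < 0} q

/-!
The characteristic polynomial of a Hermitian matrix has only real roots, namely the eigenvalues.
Descartes' rule of signs bounds the number of positive roots of a real polynomial `P` by the number
of sign changes of `P(X)`, and the number of negative roots by that of `P(-X)`. Passing from one
nonzero coefficient to the next, `P(X)` and `P(-X)` cannot both change sign if the two exponents are
consecutive, so the two numbers of sign changes add up to at most `deg P - r`, where `X ^ r` is the
largest power of `X` dividing `P`. When all roots are real, `deg P - r` is the number of nonzero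
roots, and both bounds are equalities. By the spectral theorem the form `xᴴ C x` is diagonal in an
eigenbasis, where a subspace on which it is definite is compared with the span of basis vectors.
-/

open Polynomial

section Coefficients

section Semiring

variable {R : Type*} [Semiring R]

theorem natTrailingDegree_le_eraseLead {P : R[X]} (hP : P.eraseLead ≠ 0) :
    P.natTrailingDegree ≤ P.eraseLead.natTrailingDegree := by
  refine le_natTrailingDegree hP fun i hi => ?_
  rw [eraseLead_coeff, coeff_eq_zero_of_lt_natTrailingDegree hi, ite_self]

theorem natTrailingDegree_eq_of_coeff {P : R[X]} {r : ℕ}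
    (hlt : ∀ i < r, P.coeff i = 0) (hr : P.coeff r ≠ 0) : P.natTrailingDegree = r :=
  (natTrailingDegree_le_of_ne_zero hr).antisymm
    (le_natTrailingDegree (fun hP => hr (by rw [hP, coeff_zero])) hlt)

end Semiring

variable {R : Type*} [Ring R]

theorem coeff_comp_neg_X (P : R[X]) (i : ℕ) : (P.comp (-X)).coeff i = (-1) ^ i * P.coeff i := by
  have neg_X : (-X : R[X]) = C (-1) * X := by simp
  rw [neg_X, comp_C_mul_X_coeff, ((Commute.neg_one_left _).pow_left i).eq]

theorem natDegree_comp_neg_X (P : R[X]) : (P.comp (-X)).natDegree = P.natDegree :=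
  natDegree_eq_of_degree_eq degree_comp_neg_X

theorem eraseLead_comp_neg_X (P : R[X]) : (P.comp (-X)).eraseLead = P.eraseLead.comp (-X) := by
  ext i
  simp only [eraseLead_coeff, coeff_comp_neg_X, natDegree_comp_neg_X, mul_ite, mul_zero]

end Coefficients

section SignChanges

theorem zip_tail_reverse {α : Type*} (l : List α) :
    l.reverse.zip l.reverse.tail = ((l.zip l.tail).map Prod.swap).reverse := by
  apply List.ext_getElem
  · simp
  · intro i hi _
    simp only [List.length_zip, List.length_tail, List.length_reverse] at hi
    simp only [List.getElem_zip, List.getElem_tail, List.getElem_reverse, List.getElem_map,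
      List.length_map, List.length_zip, List.length_tail, Prod.swap_prod_mk, Prod.mk.injEq]
    constructor <;> congr 1 <;> omega

theorem signChanges_reverse (l : List ℝ) : signChanges l.reverse = signChanges l := by
  simp only [signChanges, List.filter_reverse, zip_tail_reverse, List.countP_reverse,
    List.countP_map]
  simp only [Function.comp_def, Prod.fst_swap, Prod.snd_swap, mul_comm]

theorem length_destutter'_ne {α : Type*} [DecidableEq α] (a : α) (l : List α) :
    (l.destutter' (· ≠ ·) a).length = ((a :: l).zip l).countP (fun x => x.1 ≠ x.2) + 1 := by
  induction l generalizing a with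
  | nil => rfl
  | cons b l ih =>
    by_cases hab : a = b
    · subst hab
      simp [ih]
    · simp [hab, ih]

theorem length_destutter_ne_sub_one {α : Type*} [DecidableEq α] (l : List α) :
    (l.destutter (· ≠ ·)).length - 1 = (l.zip l.tail).countP (fun x => x.1 ≠ x.2) := by
  cases l with
  | nil => rfl
  | cons a l => rw [List.destutter_cons', length_destutter'_ne, Nat.add_sub_cancel, List.tail_cons]

theorem mul_neg_iff_sign_ne {R : Type*} [Ring R] [LinearOrder R] [IsStrictOrderedRing R] {a b : R}
    (ha : a ≠ 0) (hb : b ≠ 0) : a * b < 0 ↔ SignType.sign a ≠ SignType.sign b := by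
  rcases ha.lt_or_gt with ha | ha <;> rcases hb.lt_or_gt with hb | hb <;>
    simp [mul_neg_iff, ha, hb, ha.le, hb.le]

theorem signChanges_eq_length_destutter (l : List ℝ) :
    signChanges l =
      (((l.map SignType.sign).filter (· ≠ 0)).destutter (· ≠ ·)).length - 1 := by
  have filter_sign : (l.map SignType.sign).filter (· ≠ 0) =
      (l.filter (· ≠ 0)).map SignType.sign := by
    simp only [List.filter_map, Function.comp_def, ne_eq, sign_eq_zero_iff]
  rw [length_destutter_ne_sub_one, filter_sign, ← List.map_tail, List.zip_map, List.countP_map]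
  refine List.countP_congr fun ⟨a, b⟩ hab => ?_
  have ha : a ≠ 0 := by simpa using List.of_mem_filter (List.of_mem_zip hab).1
  have hb : b ≠ 0 := by
    simpa using List.of_mem_filter (List.mem_of_mem_tail (List.of_mem_zip hab).2)
  simpa using mul_neg_iff_sign_ne ha hb

theorem signChanges_map_coeff_range {P : ℝ[X]} (hP : P ≠ 0) :
    signChanges ((List.range (P.natDegree + 1)).map P.coeff) = P.signVariations := by
  rw [← signChanges_reverse, ← List.map_reverse, ← withBotSucc_degree_eq_natDegree_add_one hP,
    signChanges_eq_length_destutter]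
  rfl

theorem signChanges_map_neg_one_pow_mul_coeff_range {P : ℝ[X]} (hP : P ≠ 0) :
    signChanges ((List.range (P.natDegree + 1)).map fun i => (-1) ^ i * P.coeff i) =
      (P.comp (-X)).signVariations := by
  rw [← signChanges_map_coeff_range (mt comp_neg_X_eq_zero_iff.1 hP), natDegree_comp_neg_X]
  simp only [← coeff_comp_neg_X]

end SignChanges

section RuleOfSigns

theorem countP_lt_add_countP_gt_add_count {α : Type*} [LinearOrder α] (s : Multiset α) (a : α) :
    s.countP (a < ·) + s.countP (· < a) + s.count a = s.card := by
  induction s using Multiset.induction_on with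
  | empty => rfl
  | cons b s ih =>
    rw [Multiset.countP_cons, Multiset.countP_cons, Multiset.count_cons, Multiset.card_cons, ← ih]
    grind

theorem signVariations_eq_zero_of_eraseLead_eq_zero {R : Type*} [Semiring R] [LinearOrder R]
    {P : R[X]} (hP : P.eraseLead = 0) : P.signVariations = 0 := by
  rw [← P.eraseLead_add_monomial_natDegree_leadingCoeff, hP, zero_add, signVariations_monomial]

section Ring

variable {R : Type*} [Ring R] [LinearOrder R] [IsStrictOrderedRing R]

theorem not_sign_leadingCoeff_eq_neg_and_comp_neg_X {P Q : R[X]} (hQ : Q ≠ 0)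
    (hdeg : P.natDegree = Q.natDegree + 1) :
    ¬(SignType.sign P.leadingCoeff = -SignType.sign Q.leadingCoeff ∧
      SignType.sign (P.comp (-X)).leadingCoeff = -SignType.sign (Q.comp (-X)).leadingCoeff) := by
  rintro ⟨hsign, hsign_comp⟩
  have hQ_sign : SignType.sign Q.leadingCoeff ≠ 0 := by simpa using hQ
  have hpow : SignType.sign ((-1 : R) ^ Q.natDegree) ≠ 0 := by simp
  rw [comp_neg_X_leadingCoeff_eq, comp_neg_X_leadingCoeff_eq, hdeg, pow_succ, sign_mul, sign_mul,
    sign_mul, hsign, Left.sign_neg, sign_one] at hsign_comp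
  have mul_ne (s t : SignType) (hs : s ≠ 0) (ht : t ≠ 0) : t * -1 * -s ≠ -(t * s) := by
    decide +revert
  exact mul_ne _ _ hQ_sign hpow hsign_comp

theorem signVariations_add_comp_neg_X_le_eraseLead {P : R[X]} (hP : P.eraseLead ≠ 0) :
    P.signVariations + (P.comp (-X)).signVariations + P.eraseLead.natDegree ≤
      P.eraseLead.signVariations + (P.eraseLead.comp (-X)).signVariations + P.natDegree := by
  have hP₀ : P ≠ 0 := fun h => hP (by rw [h, eraseLead_zero])
  have hlt : P.eraseLead.natDegree < P.natDegree :=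
    P.eraseLead_natDegree_lt_or_eraseLead_eq_zero.resolve_right hP
  rw [signVariations_eq_eraseLead_add_ite hP₀,
    signVariations_eq_eraseLead_add_ite (mt comp_neg_X_eq_zero_iff.1 hP₀), eraseLead_comp_neg_X]
  by_cases hgap : P.natDegree = P.eraseLead.natDegree + 1
  · have := not_sign_leadingCoeff_eq_neg_and_comp_neg_X hP hgap
    grind
  · grind

theorem signVariations_add_comp_neg_X_add_natTrailingDegree_le (P : R[X]) :
    P.signVariations + (P.comp (-X)).signVariations + P.natTrailingDegree ≤ P.natDegree := by
  induction hd : P.natDegree using Nat.strong_induction_on generalizing P with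
  | _ d ih =>
    subst hd
    by_cases hP : P.eraseLead = 0
    · have hP_comp : (P.comp (-X)).eraseLead = 0 := by
        rw [eraseLead_comp_neg_X, hP, zero_comp]
      rw [signVariations_eq_zero_of_eraseLead_eq_zero hP,
        signVariations_eq_zero_of_eraseLead_eq_zero hP_comp, zero_add, zero_add]
      exact P.natTrailingDegree_le_natDegree
    · have hlt := P.eraseLead_natDegree_lt_or_eraseLead_eq_zero.resolve_right hP
      have := ih _ hlt P.eraseLead rfl
      have := signVariations_add_comp_neg_X_le_eraseLead hP
      have := natTrailingDegree_le_eraseLead hP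
      omega

end Ring

variable {R : Type*} [CommRing R] [LinearOrder R] [IsStrictOrderedRing R]

theorem countP_neg_roots_le_signVariations_comp_neg_X (P : R[X]) :
    P.roots.countP (· < 0) ≤ (P.comp (-X)).signVariations := by
  simpa [roots_comp_neg_X, Multiset.countP_map, ← Multiset.countP_eq_card_filter] using
    roots_countP_pos_le_signVariations (P.comp (-X))

theorem countP_pos_add_countP_neg_add_natTrailingDegree_of_splits {P : R[X]} (hP : P.Splits) :
    P.roots.countP (0 < ·) + P.roots.countP (· < 0) + P.natTrailingDegree = P.natDegree := by
  rw [← rootMultiplicity_eq_natTrailingDegree', ← count_roots, hP.natDegree_eq_card_roots,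
    countP_lt_add_countP_gt_add_count]

theorem signVariations_eq_countP_pos_roots_of_splits {P : R[X]} (hP : P.Splits) :
    P.signVariations = P.roots.countP (0 < ·) := by
  have hpos := roots_countP_pos_le_signVariations P
  have hneg := countP_neg_roots_le_signVariations_comp_neg_X P
  have hroots := countP_pos_add_countP_neg_add_natTrailingDegree_of_splits hP
  have hle := signVariations_add_comp_neg_X_add_natTrailingDegree_le P
  omega

theorem signVariations_comp_neg_X_eq_countP_neg_roots_of_splits {P : R[X]} (hP : P.Splits) :
    (P.comp (-X)).signVariations = P.roots.countP (· < 0) := by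
  rw [signVariations_eq_countP_pos_roots_of_splits hP.comp_neg_X, roots_comp_neg_X,
    Multiset.countP_map, Multiset.countP_eq_card_filter]
  simp only [Left.neg_pos_iff]

theorem signVariations_add_comp_neg_X_add_natTrailingDegree_of_splits {P : R[X]}
    (hP : P.Splits) :
    P.signVariations + (P.comp (-X)).signVariations + P.natTrailingDegree = P.natDegree := by
  rw [signVariations_eq_countP_pos_roots_of_splits hP,
    signVariations_comp_neg_X_eq_countP_neg_roots_of_splits hP,
    countP_pos_add_countP_neg_add_natTrailingDegree_of_splits hP]

end RuleOfSigns

section Inertia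

theorem repr_eq_zero_of_mem_span_image {ι R M : Type*} [Semiring R] [AddCommMonoid M] [Module R M]
    (b : Module.Basis ι R M) {s : Set ι} {x : M} (hx : x ∈ Submodule.span R (b '' s)) {i : ι}
    (hi : i ∉ s) : b.repr x i = 0 :=
  Finsupp.notMem_support_iff.1 fun h => hi (b.mem_span_image.1 hx h)

theorem finrank_span_basis_image {ι R M : Type*} [Ring R] [StrongRankCondition R]
    [AddCommGroup M] [Module R M] (b : Module.Basis ι R M) (s : Finset ι) :
    Module.finrank R (Submodule.span R (b '' s)) = s.card := by
  classical
  have : Nontrivial R := nontrivial_of_invariantBasisNumber R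
  have hli : LinearIndepOn R b s := b.linearIndependent.linearIndepOn s
  rw [← Finset.coe_image, finrank_span_finset_eq_card (by simpa using hli.id_image)]
  exact Finset.card_image_of_injective s b.injective

section Diagonal

variable {ι 𝕜 V : Type*} [Fintype ι] [NormedDivisionRing 𝕜] [AddCommGroup V] [Module 𝕜 V]
  (b : Module.Basis ι 𝕜 V) (d : ι → ℝ)

theorem sum_mul_norm_sq_repr_pos {x : V} (hx : x ≠ 0)
    (hxs : x ∈ Submodule.span 𝕜 (b '' {i | 0 < d i})) : 0 < ∑ i, d i * ‖b.repr x i‖ ^ 2 := by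
  obtain ⟨j, hj⟩ : ∃ j, b.repr x j ≠ 0 := by
    by_contra! h
    exact hx (b.repr.map_eq_zero_iff.1 (Finsupp.ext h))
  have hmem {i : ι} (hi : b.repr x i ≠ 0) : 0 < d i := by
    by_contra h
    exact hi (repr_eq_zero_of_mem_span_image b hxs h)
  refine Finset.sum_pos' (fun i _ => ?_) ⟨j, Finset.mem_univ j, ?_⟩
  · by_cases hi : b.repr x i = 0
    · simp [hi]
    · exact mul_nonneg (hmem hi).le (sq_nonneg _)
  · exact mul_pos (hmem hj) (pow_pos (norm_pos_iff.2 hj) 2)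

theorem sum_mul_norm_sq_repr_nonpos {x : V}
    (hxs : x ∈ Submodule.span 𝕜 (b '' {i | ¬ 0 < d i})) :
    ∑ i, d i * ‖b.repr x i‖ ^ 2 ≤ 0 := by
  refine Finset.sum_nonpos fun i _ => ?_
  by_cases hi : 0 < d i
  · simp [repr_eq_zero_of_mem_span_image b hxs (not_not.2 hi)]
  · exact mul_nonpos_of_nonpos_of_nonneg (not_lt.1 hi) (sq_nonneg _)

theorem isGreatest_finrank_sum_mul_norm_sq_pos :
    IsGreatest {k : ℕ | ∃ W : Submodule 𝕜 V, Module.finrank 𝕜 W = k ∧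
      ∀ x ∈ W, x ≠ 0 → 0 < ∑ i, d i * ‖b.repr x i‖ ^ 2} (Finset.univ.filter (0 < d ·)).card := by
  refine ⟨⟨_, finrank_span_basis_image b _, fun x hx hx₀ =>
    sum_mul_norm_sq_repr_pos b d hx₀ (by simpa using hx)⟩, ?_⟩
  rintro _ ⟨W, rfl, hW⟩
  have : FiniteDimensional 𝕜 V := b.finiteDimensional_of_finite
  let N := Submodule.span 𝕜 (b '' (Finset.univ.filter (¬ 0 < d ·)))
  have hdisj : Disjoint W N := by
    refine Submodule.disjoint_def.2 fun x hxW hxN => ?_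
    by_contra hx
    exact (hW x hxW hx).not_ge (sum_mul_norm_sq_repr_nonpos b d (by simpa [N] using hxN))
  have hdim := Submodule.finrank_add_finrank_le_of_disjoint hdisj
  rw [finrank_span_basis_image, Module.finrank_eq_card_basis b] at hdim
  have := Finset.card_filter_add_card_filter_not (s := Finset.univ) (0 < d ·)
  rw [Finset.card_univ] at this
  omega

end Diagonal

section Hermitian

variable {𝕜 ι : Type*} [RCLike 𝕜] [Fintype ι] [DecidableEq ι] {A : Matrix ι ι 𝕜}

theorem re_star_dotProduct_mulVec_eq_sum_eigenvalues (hA : A.IsHermitian) (x : ι → 𝕜) :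
    RCLike.re (star x ⬝ᵥ A *ᵥ x) = ∑ i, hA.eigenvalues i *
      ‖(star (hA.eigenvectorUnitary : Matrix ι ι 𝕜) *ᵥ x) i‖ ^ 2 := by
  set U : Matrix ι ι 𝕜 := (hA.eigenvectorUnitary : Matrix ι ι 𝕜)
  set D : Matrix ι ι 𝕜 := diagonal (RCLike.ofReal ∘ hA.eigenvalues)
  have hdiag : A = U * D * star U := by
    conv_lhs => rw [hA.spectral_theorem, Unitary.conjStarAlgAut_apply]
  have hform : star x ⬝ᵥ A *ᵥ x = star (star U *ᵥ x) ⬝ᵥ D *ᵥ (star U *ᵥ x) := by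
    conv_lhs => rw [hdiag]
    rw [star_mulVec, ← dotProduct_mulVec, mulVec_mulVec, mulVec_mulVec, star_eq_conjTranspose U,
      conjTranspose_conjTranspose, Matrix.mul_assoc]
  rw [hform]
  generalize star U *ᵥ x = y
  simp only [dotProduct, D, mulVec_diagonal, map_sum]
  refine Finset.sum_congr rfl fun i _ => ?_
  rw [Pi.star_apply, Function.comp_apply, mul_left_comm, RCLike.star_def, RCLike.conj_mul]
  norm_cast

theorem charpoly_eq_map_charpoly_diagonal_eigenvalues (hA : A.IsHermitian) :
    A.charpoly = (diagonal hA.eigenvalues).charpoly.map (algebraMap ℝ 𝕜) := by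
  simp [hA.charpoly_eq, charpoly_diagonal, Polynomial.map_prod]

theorem isHermTypeOf_card_eigenvalues {n : ℕ} {C : Matrix (Fin n) (Fin n) ℂ}
    (hC : C.IsHermitian) :
    C.IsHermTypeOf (Finset.univ.filter (0 < hC.eigenvalues ·)).card
      (Finset.univ.filter (hC.eigenvalues · < 0)).card := by
  let b := Module.Basis.ofEquivFun (UnitaryGroup.toLinearEquiv (star hC.eigenvectorUnitary))
  have hform (x : Fin n → ℂ) :
      (star x ⬝ᵥ C *ᵥ x).re = ∑ i, hC.eigenvalues i * ‖b.repr x i‖ ^ 2 :=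
    re_star_dotProduct_mulVec_eq_sum_eigenvalues hC x
  constructor
  · simpa only [hform] using isGreatest_finrank_sum_mul_norm_sq_pos b hC.eigenvalues
  · simpa only [hform, Pi.neg_apply, neg_mul, Finset.sum_neg_distrib, Left.neg_pos_iff] using
      isGreatest_finrank_sum_mul_norm_sq_pos b (-hC.eigenvalues)

end Hermitian

end Inertia

section DiagonalCharpoly

variable {R ι : Type*} [CommRing R] [Fintype ι] [DecidableEq ι] (d : ι → R)

theorem splits_charpoly_diagonal : (diagonal d).charpoly.Splits := by
  rw [charpoly_diagonal]
  exact Splits.prod fun i _ => Splits.X_sub_C (d i)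

theorem roots_charpoly_diagonal [IsDomain R] :
    (diagonal d).charpoly.roots = Finset.univ.val.map d := by
  rw [charpoly_diagonal, roots_prod _ _ (Finset.prod_ne_zero_iff.2 fun i _ => X_sub_C_ne_zero _)]
  simp

variable [LinearOrder R] [IsStrictOrderedRing R]

theorem signVariations_charpoly_diagonal :
    (diagonal d).charpoly.signVariations = (Finset.univ.filter (0 < d ·)).card := by
  rw [signVariations_eq_countP_pos_roots_of_splits (splits_charpoly_diagonal d),
    roots_charpoly_diagonal, Multiset.countP_map]
  rfl

theorem signVariations_charpoly_diagonal_comp_neg_X :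
    ((diagonal d).charpoly.comp (-X)).signVariations = (Finset.univ.filter (d · < 0)).card := by
  rw [signVariations_comp_neg_X_eq_countP_neg_roots_of_splits (splits_charpoly_diagonal d),
    roots_charpoly_diagonal, Multiset.countP_map]
  rfl

end DiagonalCharpoly

theorem stmt_9 {n : ℕ} (C : Matrix (Fin n) (Fin n) ℂ) (hC : C.IsHermitian)
    (p q : ℕ)
    (hp : p = signChanges ((List.range (n + 1)).map fun i => (C.charpoly.coeff i).re))
    (hq : q = signChanges ((List.range (n + 1)).map fun i =>
      (-1 : ℝ) ^ i * (C.charpoly.coeff i).re)) :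
    (∀ i : ℕ, (C.charpoly.coeff i).im = 0) ∧
    C.IsHermTypeOf p q ∧
    (∀ r : ℕ, (∀ i < r, C.charpoly.coeff i = 0) → C.charpoly.coeff r ≠ 0 →
      p + q = n - r) := by
  set P : ℝ[X] := (diagonal hC.eigenvalues).charpoly with hP
  have hcoeff (i : ℕ) : C.charpoly.coeff i = P.coeff i := by
    rw [charpoly_eq_map_charpoly_diagonal_eigenvalues hC, coeff_map, Complex.coe_algebraMap]
  have hP₀ : P ≠ 0 := (charpoly_monic _).ne_zero
  have hdeg : P.natDegree = n := by rw [hP, charpoly_natDegree_eq_dim, Fintype.card_fin]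
  simp only [hcoeff, Complex.ofReal_re] at hp hq
  rw [← hdeg, signChanges_map_coeff_range hP₀] at hp
  rw [← hdeg, signChanges_map_neg_one_pow_mul_coeff_range hP₀] at hq
  refine ⟨fun i => by rw [hcoeff, Complex.ofReal_im], ?_, fun r hlt hr => ?_⟩
  · rw [hp, hq, signVariations_charpoly_diagonal, signVariations_charpoly_diagonal_comp_neg_X]
    exact isHermTypeOf_card_eigenvalues hC
  · simp only [hcoeff, Complex.ofReal_eq_zero, ne_eq] at hlt hr
    have hsum := signVariations_add_comp_neg_X_add_natTrailingDegree_of_splits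
      (splits_charpoly_diagonal hC.eigenvalues)
    rw [← hP, ← hp, ← hq, natTrailingDegree_eq_of_coeff hlt hr, hdeg] at hsum
    exact Nat.eq_sub_of_add_eq hsum
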